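/- Let G be a finite group, P a Sylow p-subgroup of G, and N a normal subgroup of G. If P ∩ N ≤ Φ(P), then N is p-nilpotent. -/

import Mathlib

/-- A group `G` is `p`-nilpotent if it has a normal `p`-complement: a normal subgroup
of order prime to `p` whose index is a power of `p`. -/
def IsPNilpotent (p : ℕ) (G : Type) [Group G] : Prop :=
  ∃ K : Subgroup G, K.Normal ∧ ¬ p ∣ Nat.card K ∧ ∃ m : ℕ, K.index = p ^ m

open scoped commutatorElement

theorem aux_retract {E A : Type*} [Group E] [Finite E] [CommGroup A] [Finite A]
    (i : A →* E) (hc : ∀ a e, i a * e = e * i a) (H : Subgroup E) (φ : H →* A)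
    (hi : ∀ a, i a ∈ H) (hφ : ∀ a, φ ⟨i a, hi a⟩ = a)
    (hco : (Nat.card A).Coprime H.index) :
    ∃ T : E →* A, ∀ a, T (i a) = a := by
  obtain ⟨m, hm⟩ : ∃ m : ℕ, ∀ a : A, (a ^ H.index) ^ m = a := by
    refine ⟨(Nat.gcdB (Nat.card A) H.index).natMod (Nat.card A), fun a => ?_⟩
    have hpos : (Nat.card A : ℤ) ≠ 0 := by exact_mod_cast Nat.card_pos.ne'
    have h1 : (((Nat.gcdB (Nat.card A) H.index).natMod (Nat.card A) : ℕ) : ℤ)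
        = Nat.gcdB (Nat.card A) H.index % (Nat.card A) := by
      rw [Int.natMod, Int.toNat_of_nonneg (Int.emod_nonneg _ hpos)]
    rw [← zpow_natCast, h1]
    have h2 : ∀ b : A, ∀ z : ℤ, b ^ (z % (Nat.card A : ℤ)) = b ^ z := by
      intro b z
      conv_rhs => rw [← Int.emod_add_mul_ediv z (Nat.card A), zpow_add, zpow_mul, zpow_natCast,
        pow_card_eq_one', one_zpow, mul_one]
    rw [h2]
    exact (powCoprime hco).left_inv a
  refine ⟨(powMonoidHom m).comp φ.transfer, fun a => ?_⟩
  have key : φ.transfer (i a) = a ^ H.index := by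
    rw [MonoidHom.transfer_eq_pow φ (i a)]
    · have : ∀ h, (⟨i a ^ H.index, h⟩ : H) = ⟨i (a ^ H.index), hi _⟩ := by
        intro h; ext; simp
      rw [this, hφ]
    · intro k g₀ _
      rw [← map_pow, mul_assoc, hc, inv_mul_cancel_left]
  simp only [MonoidHom.comp_apply, key]
  exact hm a

theorem aux_lift {p : ℕ} [Fact p.Prime] {G P B C : Type*} [Group G] [Group P] [Group B] [Group C]
    [Finite G] [Finite B] (hB : IsPGroup p B) (ι : P →* G) (κ : G →* C) (π : B →* C) (θ : P →* B)
    (hι : Function.Injective ι) (hidx : ¬ p ∣ ι.range.index)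
    (hπ : Function.Surjective π) (hcomm : ∀ x, π (θ x) = κ (ι x))
    (hcen : ∀ a ∈ π.ker, ∀ b, a * b = b * a) :
    ∃ f : G →* B, ∀ g, π (f g) = κ g := by
  classical
  let E : Subgroup (G × B) :=
    MonoidHom.eqLocus (κ.comp (MonoidHom.fst G B)) (π.comp (MonoidHom.snd G B))
  have hE : ∀ e : E, κ e.1.1 = π e.1.2 := fun e => e.2
  let _ : CommGroup π.ker :=
    { (inferInstance : Group π.ker) with
      mul_comm := fun a b => Subtype.ext (hcen a a.2 b) }
  let q : E →* G := (MonoidHom.fst G B).comp E.subtype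
  let s : E →* B := (MonoidHom.snd G B).comp E.subtype
  have hq : Function.Surjective q := by
    intro g
    obtain ⟨b, hb⟩ := hπ (κ g)
    exact ⟨⟨(g, b), hb.symm⟩, rfl⟩
  let i : π.ker →* E :=
    { toFun := fun a => ⟨(1, a), by
        change κ 1 = π a
        rw [map_one]; exact a.2.symm⟩
      map_one' := rfl
      map_mul' := fun a b => by ext <;> simp }
  let H : Subgroup E := ι.range.comap q
  have hH : H.index = ι.range.index := Subgroup.index_comap_of_surjective _ hq
  let r : ι.range →* P := (MonoidHom.ofInjective hι).symm.toMonoidHom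
  have hr : ∀ y, ι (r y) = y := fun y => MonoidHom.apply_ofInjective_symm hι y
  let ρ : H →* B := θ.comp (r.comp (q.subgroupComap ι.range))
  have hρ : ∀ y : H, π (ρ y) = κ y.1.1.1 := by
    intro y
    change π (θ (r _)) = _
    rw [hcomm, hr]; rfl
  let φ : H →* π.ker :=
    { toFun := fun y => ⟨(ρ y)⁻¹ * s y.1, by
        rw [MonoidHom.mem_ker, map_mul, map_inv, hρ, hE y.1]; exact inv_mul_cancel _⟩
      map_one' := by ext; simp
      map_mul' := fun x y => by
        ext
        have := hcen ((ρ x)⁻¹ * s x.1) (by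
          rw [MonoidHom.mem_ker, map_mul, map_inv, hρ, hE x.1]; exact inv_mul_cancel _) (ρ y)⁻¹
        simp only [map_mul, Subgroup.coe_mul, mul_inv_rev]
        rw [← mul_assoc, mul_assoc (ρ y)⁻¹, ← this]
        group }
  obtain ⟨T, hT⟩ := aux_retract i (by
      intro a e
      apply Subtype.ext
      exact Prod.ext (by simp [i]) (hcen a a.2 _)) H φ
    (fun a => (one_mem _ : (1 : G) ∈ ι.range)) (by
      intro a
      ext
      change (ρ _)⁻¹ * (a : B) = a
      have : ρ ⟨i a, (one_mem _ : (1 : G) ∈ ι.range)⟩ = 1 := by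
        change θ (r ⟨1, _⟩) = 1
        have : (⟨1, one_mem _⟩ : ι.range) = 1 := rfl
        rw [this, map_one, map_one]
      rw [this]; simp) (by
      rw [hH]
      obtain ⟨n, hn⟩ := IsPGroup.iff_card.1 (hB.to_subgroup π.ker)
      rw [hn]
      exact ((Fact.out : p.Prime).coprime_iff_not_dvd.2 hidx).pow_left n)
  let F : E →* B :=
    { toFun := fun e => s e * ((T e : π.ker) : B)⁻¹
      map_one' := by simp
      map_mul' := fun x y => by
        have h1 := hcen (T x)⁻¹ (inv_mem (T x).2) (s y * (T y : B)⁻¹)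
        have h2 := hcen (T x)⁻¹ (inv_mem (T x).2) ((T y : B)⁻¹)
        simp only [map_mul, Subgroup.coe_mul, mul_inv_rev]
        rw [mul_assoc (s x) (_⁻¹) _, h1]
        group }
  have hF : ∀ e, π (F e) = κ (q e) := by
    intro e
    change π (s e * ((T e : π.ker) : B)⁻¹) = _
    rw [map_mul, map_inv, (MonoidHom.mem_ker).1 (T e).2, inv_one, mul_one]
    exact (hE e).symm
  have hker : q.ker ≤ F.ker := by
    intro e he
    have h1 : e.1.1 = 1 := he
    have h2 : e.1.2 ∈ π.ker := by
      rw [MonoidHom.mem_ker, ← hE, h1, map_one]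
    have h3 : e = i ⟨e.1.2, h2⟩ := by
      apply Subtype.ext
      exact Prod.ext h1 rfl
    rw [MonoidHom.mem_ker]
    change s e * ((T e : π.ker) : B)⁻¹ = 1
    rw [h3, hT]
    exact mul_inv_cancel _
  refine ⟨MonoidHom.liftOfSurjective q hq ⟨F, hker⟩, fun g => ?_⟩
  obtain ⟨e, rfl⟩ := hq g
  rw [← hF]
  congr 1
  exact MonoidHom.liftOfRightInverse_comp_apply q _ _ ⟨F, hker⟩ e

theorem aux_comm_lt {P : Type*} [Group P] [Group.IsNilpotent P] (Q : Subgroup P) (hQ : Q ≠ ⊥)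
    (h : Q ≤ ⁅Q, (⊤ : Subgroup P)⁆) : False := by
  obtain ⟨n, hn⟩ := Subgroup.nilpotent_iff_lowerCentralSeries.1 (inferInstance : Group.IsNilpotent P)
  have : ∀ n, Q ≤ (⊤ : Subgroup P).lowerCentralSeries n := by
    intro n
    induction n with
    | zero => exact le_top
    | succ k ih =>
      rw [Subgroup.lowerCentralSeries_succ]
      exact h.trans (Subgroup.commutator_mono ih le_rfl)
  exact hQ (le_bot_iff.1 (hn ▸ this n))

theorem aux_surj {p : ℕ} [Fact p.Prime] {G P : Type*} [Group G] [Group P] [Finite G]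
    (ι : P →* G) (hidx : ¬ p ∣ ι.range.index) (K : Subgroup G) [K.Normal]
    (hK : ∃ n, K.index = p ^ n) :
    Function.Surjective ((QuotientGroup.mk' K).comp ι) := by
  obtain ⟨n, hn⟩ := hK
  rw [← MonoidHom.range_eq_top, MonoidHom.range_comp, ← Subgroup.index_eq_one]
  have h1 := Subgroup.index_map_dvd ι.range (QuotientGroup.mk'_surjective K)
  have h2 := Subgroup.index_dvd_card (ι.range.map (QuotientGroup.mk' K))
  have h3 : Nat.card (G ⧸ K) = p ^ n := hn
  rw [h3] at h2
  have h4 := ((Fact.out : p.Prime).coprime_iff_not_dvd.2 hidx).pow_left n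
  exact Nat.eq_one_of_dvd_coprimes h4 h2 h1

theorem aux_step {p : ℕ} [Fact p.Prime] {G P : Type*} [Group G] [Group P] [Finite G] [Finite P]
    (hP : IsPGroup p P) (ι : P →* G) (hι : Function.Injective ι) (hidx : ¬ p ∣ ι.range.index)
    (K : Subgroup G) [K.Normal] (hK : ∃ n, K.index = p ^ n)
    (hf : K.comap ι ≤ frattini P) (hQ : K.comap ι ≠ ⊥) :
    ∃ K' : Subgroup G, K'.Normal ∧ (∃ n, K'.index = p ^ n) ∧ K' < K := by
  have := hP.isNilpotent
  set Q := K.comap ι with hQdef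
  let R : Subgroup P := ⁅Q, (⊤ : Subgroup P)⁆
  have hRQ : R ≤ Q := Subgroup.commutator_le_left Q ⊤
  have hsurj := aux_surj ι hidx K hK
  let π : P ⧸ R →* G ⧸ K := QuotientGroup.map R K ι hRQ
  have hmk : ∀ x : P, π (QuotientGroup.mk' R x) = QuotientGroup.mk' K (ι x) := fun x => rfl
  have hker : ∀ x : P, QuotientGroup.mk' R x ∈ π.ker ↔ x ∈ Q := by
    intro x
    rw [MonoidHom.mem_ker, hmk, ← MonoidHom.mem_ker, QuotientGroup.ker_mk']; rfl
  have hB : IsPGroup p (P ⧸ R) := hP.to_quotient R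
  obtain ⟨f, hfl⟩ := aux_lift hB ι (QuotientGroup.mk' K) π (QuotientGroup.mk' R) hι hidx
    (fun c => by
      obtain ⟨x, hx⟩ := hsurj c
      exact ⟨QuotientGroup.mk' R x, hx⟩) hmk (by
      intro a ha b
      obtain ⟨x, rfl⟩ := QuotientGroup.mk'_surjective R a
      obtain ⟨y, rfl⟩ := QuotientGroup.mk'_surjective R b
      have h1 : ⁅x, y⁆ ∈ R := Subgroup.commutator_mem_commutator ((hker x).1 ha) trivial
      rw [← commutatorElement_eq_one_iff_mul_comm, ← map_commutatorElement, ← MonoidHom.mem_ker,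
        QuotientGroup.ker_mk']
      exact h1)
  have hfs : f.range.comap (QuotientGroup.mk' R) = ⊤ := by
    apply frattini_nongenerating
    rw [eq_top_iff]
    intro x _
    have h1 : QuotientGroup.mk' R x * (f (ι x))⁻¹ ∈ π.ker := by
      rw [MonoidHom.mem_ker, map_mul, map_inv, hfl, hmk, mul_inv_cancel]
    obtain ⟨y, hy⟩ := QuotientGroup.mk'_surjective R (f (ι x))
    have h2 : x * y⁻¹ ∈ Q := by
      rw [← hker, map_mul, map_inv, hy]; exact h1
    have h3 : y ∈ f.range.comap (QuotientGroup.mk' R) := ⟨ι x, hy.symm⟩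
    have : x = (x * y⁻¹) * y := by group
    rw [this]
    exact mul_mem (Subgroup.mem_sup_right (hf h2)) (Subgroup.mem_sup_left h3)
  refine ⟨f.ker, inferInstance, ?_, ?_⟩
  · rw [Subgroup.index_ker]
    exact IsPGroup.iff_card.1 (hB.to_subgroup _)
  · refine lt_of_le_of_ne ?_ ?_
    · intro g hg
      have := hfl g
      rw [(MonoidHom.mem_ker).1 hg, map_one] at this
      rw [← QuotientGroup.ker_mk' K]
      exact this.symm
    · intro heq
      apply aux_comm_lt Q hQ
      intro x hx
      have h1 : x ∈ f.range.comap (QuotientGroup.mk' R) := by rw [hfs]; trivial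
      obtain ⟨g, hg⟩ := h1
      have h2 : g ∈ K := by
        rw [← QuotientGroup.ker_mk' K, MonoidHom.mem_ker, ← hfl, hg]
        exact (hker x).2 hx
      rw [← heq, MonoidHom.mem_ker, hg] at h2
      rw [← MonoidHom.mem_ker, QuotientGroup.ker_mk'] at h2
      exact h2

theorem aux_main {p : ℕ} [Fact p.Prime] {G P : Type*} [Group G] [Group P] [Finite G] [Finite P]
    (hP : IsPGroup p P) (ι : P →* G) (hι : Function.Injective ι) (hidx : ¬ p ∣ ι.range.index)
    (c : ℕ) : ∀ (K : Subgroup G), K.Normal → (∃ n, K.index = p ^ n) →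
    K.comap ι ≤ frattini P → Nat.card K ≤ c →
    ∃ L : Subgroup G, L.Normal ∧ (∃ n, L.index = p ^ n) ∧ L ≤ K ∧ ¬ p ∣ Nat.card L := by
  induction c with
  | zero =>
    intro K _ _ _ h
    exact absurd h (Nat.not_le.2 Nat.card_pos)
  | succ c ih =>
    intro K hN hK hf hc
    by_cases hQ : K.comap ι = ⊥
    · refine ⟨K, hN, hK, le_rfl, ?_⟩
      have hinj : Function.Injective ((QuotientGroup.mk' K).comp ι) := by
        rw [← MonoidHom.ker_eq_bot_iff, ← MonoidHom.comap_ker, QuotientGroup.ker_mk', hQ]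
      have hcard : Nat.card P = K.index :=
        Nat.card_congr (Equiv.ofBijective _ ⟨hinj, aux_surj ι hidx K hK⟩)
      have hr : Nat.card ι.range = Nat.card P :=
        (Nat.card_congr (MonoidHom.ofInjective hι).toEquiv).symm
      have h1 := K.card_mul_index
      have h2 := ι.range.card_mul_index
      rw [hr, hcard, ← h1, mul_comm] at h2
      have hpos : 0 < K.index := hcard ▸ Nat.card_pos
      rw [← Nat.eq_of_mul_eq_mul_right hpos h2]
      exact hidx
    · obtain ⟨K', hN', hK', hlt⟩ := aux_step hP ι hι hidx K hK hf hQ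
      have hcl : Nat.card K' < Nat.card K := by
        refine lt_of_le_of_ne (Subgroup.card_le_of_le hlt.le) fun h => ?_
        exact hlt.ne (Subgroup.eq_of_le_of_card_ge hlt.le h.ge)
      obtain ⟨L, a, b, d, e⟩ := ih K' hN' hK' ((Subgroup.comap_mono hlt.le).trans hf) (by omega)
      exact ⟨L, a, b, d.trans hlt.le, e⟩

/-- If `P` is a Sylow `p`-subgroup of the finite group `G`, `N ⊴ G`, and
`P ∩ N ≤ Φ(P)`, then `N` is `p`-nilpotent. -/
theorem pNilpotent_of_inter_le_frattini (G : Type) [Group G] [Finite G]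
    (p : ℕ) [Fact p.Prime] (P : Sylow p G) (N : Subgroup G) [N.Normal]
    (h : N.subgroupOf (P : Subgroup G) ≤ frattini ↥(P : Subgroup G)) :
    IsPNilpotent p ↥N := by
  let S : Subgroup G := (P : Subgroup G) ⊔ N
  have hPS : (P : Subgroup G) ≤ S := le_sup_left
  have hNS : N ≤ S := le_sup_right
  obtain ⟨L, hL, ⟨n, hn⟩, hLN, hLp⟩ := aux_main (G := S) (P := P) P.isPGroup'
    (Subgroup.inclusion hPS) (Subgroup.inclusion_injective hPS)
    (by
      rw [Subgroup.inclusion_range]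
      intro hd
      exact P.not_dvd_index (hd.trans (Subgroup.relIndex_dvd_index_of_le hPS)))
    _ (N.subgroupOf S) inferInstance
    (by
      change ∃ n, N.relIndex S = p ^ n
      rw [Subgroup.relIndex_sup_right]
      exact P.isPGroup'.index _)
    h le_rfl
  refine ⟨L.comap (Subgroup.inclusion hNS), inferInstance, ?_, ?_⟩
  · intro hd
    apply hLp
    refine hd.trans ?_
    exact Subgroup.card_dvd_of_injective ((Subgroup.inclusion hNS).subgroupComap L)
      (fun x y hxy => by
        apply Subtype.ext
        apply Subgroup.inclusion_injective hNS
        exact congrArg Subtype.val hxy)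
  · rw [Subgroup.index_comap]
    have h1 := Subgroup.relIndex_dvd_index_of_normal L (Subgroup.inclusion hNS).range
    rw [hn] at h1
    obtain ⟨m, _, hm⟩ := (Nat.dvd_prime_pow (Fact.out : p.Prime)).1 h1
    exact ⟨m, hm⟩
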